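/- Let φ be holomorphic and injective on the exterior disk Δ = {z ∈ ℂ : |z| > 1}, with Laurent expansion φ(z) = z + φ₀ + ∑_{k≥1} φ_{-k} z^{-k} at infinity, and let n ≥ 1. Then the function r ↦ E_n(r) is nonincreasing on (1, ∞): for all 1 < r ≤ r' one has E_n(r') ≤ E_n(r). -/

import Mathlib

open MeasureTheory Filter

/-- The partition function `Z_n(γ_r)` of the Coulomb gas (at `β = 2`) on the analytic
curve `γ_r`, the image of the unit circle under `φ_r(z) = φ(rz)/r`:
`Z_n(r) = (1/(n! r^{n(n-1)})) ∫_{[−π,π]^n} ∏_{μ<ν} |φ(re^{iθ_μ}) − φ(re^{iθ_ν})|²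
∏_μ |φ'(re^{iθ_μ})| dθ`. -/
noncomputable def Zn (φ : ℂ → ℂ) (n : ℕ) (r : ℝ) : ℝ :=
  (1 / (n.factorial * r ^ (n * (n - 1)))) *
    ∫ θ in Set.pi Set.univ (fun _ : Fin n => Set.Icc (-Real.pi) Real.pi),
      (∏ p ∈ Finset.univ.filter (fun p : Fin n × Fin n => p.1 < p.2),
        ‖φ ((r : ℂ) * Complex.exp (Complex.I * (θ p.1 : ℂ)))
          - φ ((r : ℂ) * Complex.exp (Complex.I * (θ p.2 : ℂ)))‖ ^ 2) *
      ∏ μ, ‖deriv φ ((r : ℂ) * Complex.exp (Complex.I * (θ μ : ℂ)))‖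

/-- `E_n(r) = log(Z_n(r)/(2π)^n)`, the "finite `n` Loewner energy" of `γ_r`. -/
noncomputable def En (φ : ℂ → ℂ) (n : ℕ) (r : ℝ) : ℝ :=
  Real.log (Zn φ n r / (2 * Real.pi) ^ n)


lemma hardy_diff {X : Type*} [TopologicalSpace X] [CompactSpace X] [MeasurableSpace X]
    [BorelSpace X] (μ : Measure X) [IsFiniteMeasure μ] (P : ℂ → X → ℂ) (u : X → ℂ)
    (hu : Measurable u) (hu1 : ∀ x, ‖u x‖ ≤ 1)
    (hc : ContinuousOn (Function.uncurry P) (Metric.ball 0 1 ×ˢ Set.univ))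
    (hd : ∀ x, DifferentiableOn ℂ (fun w => P w x) (Metric.ball 0 1)) :
    DifferentiableOn ℂ (fun w => ∫ x, u x * P w x ∂μ) (Metric.ball 0 1) := by
  intro w hw
  refine DifferentiableAt.differentiableWithinAt ?_
  have hw1 : ‖w‖ < 1 := by simpa using hw
  obtain ⟨ρ, hρ, hρ1⟩ : ∃ ρ : ℝ, 0 < ρ ∧ ‖w‖ + 2 * ρ < 1 := ⟨(1 - ‖w‖) / 4, by linarith, by linarith⟩
  have hsub : Metric.closedBall w (2 * ρ) ⊆ Metric.ball (0 : ℂ) 1 := by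
    intro z hz
    rw [mem_closedBall_iff_norm] at hz
    rw [mem_ball_zero_iff]
    have := norm_add_le (z - w) w
    simp at this
    linarith
  have hcont : ∀ z ∈ Metric.ball (0 : ℂ) 1, Continuous (P z) := by
    intro z hz
    have : ContinuousOn (fun x : X => Function.uncurry P (z, x)) Set.univ :=
      hc.comp (by fun_prop) (fun x _ => ⟨hz, trivial⟩)
    simpa [continuousOn_univ, Function.uncurry] using this
  obtain ⟨M, hM⟩ : ∃ M, ∀ q ∈ Metric.closedBall w (2 * ρ) ×ˢ (Set.univ : Set X),
      ‖Function.uncurry P q‖ ≤ M :=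
    ((isCompact_closedBall w (2 * ρ)).prod isCompact_univ).exists_bound_of_continuousOn
      (hc.mono (Set.prod_mono hsub le_rfl))
  have hder : ∀ x, ∀ z ∈ Metric.ball w ρ, HasDerivAt (fun z => P z x) (deriv (fun z => P z x) z) z := by
    intro x z hz
    have hz' : z ∈ Metric.ball (0 : ℂ) 1 := hsub (Metric.ball_subset_closedBall
      (Metric.ball_subset_ball (by linarith) hz))
    exact ((hd x z hz').differentiableAt (Metric.isOpen_ball.mem_nhds hz')).hasDerivAt
  have hwρ : w ∈ Metric.ball w ρ := Metric.mem_ball_self hρ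
  have hmeas : ∀ z ∈ Metric.ball (0 : ℂ) 1, Measurable (fun x => u x * P z x) := fun z hz =>
    hu.mul (hcont z hz).measurable
  have key := hasDerivAt_integral_of_dominated_loc_of_deriv_le (μ := μ) (𝕜 := ℂ)
    (F := fun z x => u x * P z x) (x₀ := w) (s := Metric.ball w ρ) (bound := fun _ => M / ρ)
    (F' := fun z x => u x * deriv (fun z => P z x) z)
    (Metric.ball_mem_nhds w hρ)
    (by
      filter_upwards [Metric.isOpen_ball.mem_nhds hw] with z hz
      exact (hmeas z hz).aestronglyMeasurable)
    (by
      refine Integrable.mono' (integrable_const M) (hmeas w hw).aestronglyMeasurable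
        (Eventually.of_forall fun x => ?_)
      rw [norm_mul]
      have h1 := hM (w, x) ⟨Metric.mem_closedBall_self (by linarith), trivial⟩
      simp only [Function.uncurry] at h1
      nlinarith [norm_nonneg (u x), hu1 x, norm_nonneg (P w x)])
    (by
      refine (hu.mul ?_).aestronglyMeasurable
      refine measurable_of_tendsto_metrizable (f := fun (k : ℕ) x =>
        (((ρ / 2 / (k + 1) : ℝ) : ℂ))⁻¹ * (P (w + ((ρ / 2 / (k + 1) : ℝ) : ℂ)) x - P w x)) ?_ ?_
      · intro k
        refine Measurable.const_mul (Measurable.sub (hcont _ (hsub ?_)).measurable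
          (hcont _ hw).measurable) _
        rw [mem_closedBall_iff_norm]
        simp only [add_sub_cancel_left, Complex.norm_real, Real.norm_eq_abs]
        rw [abs_of_pos (by positivity), div_le_iff₀ (by positivity)]
        have : (0 : ℝ) ≤ k := by positivity
        nlinarith
      · rw [tendsto_pi_nhds]
        intro x
        have h1 := (hasDerivAt_iff_tendsto_slope_zero.1 (hder x w hwρ))
        have h2 : Tendsto (fun k : ℕ => (((ρ / 2 / (k + 1) : ℝ) : ℂ))) atTop (nhdsWithin 0 {0}ᶜ) := by
          rw [tendsto_nhdsWithin_iff]
          constructor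
          · have h3 : Tendsto (fun k : ℕ => (ρ / 2 / (k + 1) : ℝ)) atTop (nhds 0) := by
              have := (tendsto_one_div_add_atTop_nhds_zero_nat (𝕜 := ℝ)).const_mul (ρ / 2)
              simpa [div_eq_mul_inv] using this
            exact_mod_cast (Complex.continuous_ofReal.tendsto 0).comp h3
          · refine Eventually.of_forall fun k => ?_
            have : (0 : ℝ) < ρ / 2 / (k + 1) := by positivity
            simpa only [Set.mem_compl_iff, Set.mem_singleton_iff, Complex.ofReal_eq_zero] using this.ne'
        simpa [Function.comp_def] using h1.comp h2)
    (Eventually.of_forall fun x z hz => by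
      have hs2 : Metric.closedBall z ρ ⊆ Metric.closedBall w (2 * ρ) :=
        Metric.closedBall_subset_closedBall' (by rw [Metric.mem_ball] at hz; linarith)
      have hb : ‖deriv (fun z => P z x) z‖ ≤ M / ρ := by
        refine Complex.norm_deriv_le_of_forall_mem_sphere_norm_le hρ ?_ ?_
        · refine DifferentiableOn.diffContOnCl ?_
          refine (hd x).mono ((closure_mono Metric.ball_subset_closedBall).trans ?_)
          rw [Metric.isClosed_closedBall.closure_eq]
          exact hs2.trans hsub
        · intro y hy
          exact hM (y, x) ⟨hs2 (Metric.sphere_subset_closedBall hy), trivial⟩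
      rw [norm_mul]
      nlinarith [norm_nonneg (u x), hu1 x, norm_nonneg (deriv (fun z => P z x) z)])
    (integrable_const _)
    (Eventually.of_forall fun x z hz => (hder x z hz).const_mul (u x))
  exact key.2.differentiableAt

lemma hardy_mono {X : Type*} [TopologicalSpace X] [CompactSpace X] [MeasurableSpace X]
    [BorelSpace X] (μ : Measure X) [IsFiniteMeasure μ] (P : ℂ → X → ℂ)
    (hc : ContinuousOn (Function.uncurry P) (Metric.ball 0 1 ×ˢ Set.univ))
    (hd : ∀ x, DifferentiableOn ℂ (fun w => P w x) (Metric.ball 0 1))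
    (hrot : ∀ w ∈ Metric.ball (0 : ℂ) 1, ∫ x, ‖P w x‖ ∂μ = ∫ x, ‖P (‖w‖ : ℂ) x‖ ∂μ)
    (s t : ℝ) (hs : 0 ≤ s) (hst : s ≤ t) (ht0 : 0 < t) (ht : t < 1) :
    ∫ x, ‖P (s : ℂ) x‖ ∂μ ≤ ∫ x, ‖P (t : ℂ) x‖ ∂μ := by
  have hcont : ∀ z ∈ Metric.ball (0 : ℂ) 1, Continuous (P z) := by
    intro z hz
    have : ContinuousOn (fun x : X => Function.uncurry P (z, x)) Set.univ :=
      hc.comp (by fun_prop) (fun x _ => ⟨hz, trivial⟩)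
    simpa [continuousOn_univ, Function.uncurry] using this
  have hsb : (s : ℂ) ∈ Metric.ball (0 : ℂ) 1 := by
    simp [abs_of_nonneg hs]; linarith
  set u : X → ℂ := fun x => (starRingEnd ℂ) (P s x) / (‖P s x‖ : ℂ) with hu
  have hu1 : ∀ x, ‖u x‖ ≤ 1 := by
    intro x
    simp only [hu, norm_div, RCLike.norm_conj, Complex.norm_real, norm_norm]
    exact div_self_le_one _
  have hum : Measurable u := by
    have := (hcont _ hsb).measurable
    have h2 := Complex.continuous_conj.measurable.comp this
    exact h2.div (Complex.measurable_ofReal.comp this.norm)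
  have huP : ∀ x, u x * P s x = (‖P s x‖ : ℂ) := by
    intro x
    by_cases h : P s x = 0
    · simp [h]
    · have : (‖P s x‖ : ℂ) ≠ 0 := by simpa using h
      simp only [hu]
      field_simp
      rw [mul_comm, Complex.mul_conj, Complex.normSq_eq_norm_sq]
      push_cast; rfl
  have hk := hardy_diff μ P u hum hu1 hc hd
  have hmax := Complex.norm_le_of_forall_mem_frontier_norm_le (U := Metric.ball (0 : ℂ) t)
    (f := fun w => ∫ x, u x * P w x ∂μ) (C := ∫ x, ‖P (t : ℂ) x‖ ∂μ) (z := (s : ℂ))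
    Metric.isBounded_ball
    (by
      refine DifferentiableOn.diffContOnCl (hk.mono ?_)
      rw [closure_ball _ ht0.ne']
      exact Metric.closedBall_subset_ball ht)
    (by
      intro z hz
      rw [frontier_ball _ ht0.ne', mem_sphere_zero_iff_norm] at hz
      have hzb : z ∈ Metric.ball (0 : ℂ) 1 := by simpa [hz] using ht
      rw [← hz, ← hrot z hzb]
      refine (norm_integral_le_integral_norm _).trans ?_
      have hint : Integrable (fun x => ‖P z x‖) μ := by
        obtain ⟨M, hM⟩ := isCompact_univ.exists_bound_of_continuousOn (hcont z hzb).continuousOn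
        refine Integrable.mono' (integrable_const M) (hcont z hzb).norm.measurable.aestronglyMeasurable
          (Eventually.of_forall fun x => by simpa using hM x trivial)
      refine integral_mono_of_nonneg (Eventually.of_forall fun x => norm_nonneg _) hint
        (Eventually.of_forall fun x => ?_)
      simp only [norm_mul]
      nlinarith [norm_nonneg (u x), hu1 x, norm_nonneg (P z x)])
    (by
      rw [closure_ball _ ht0.ne']
      simp [abs_of_nonneg hs, hst])
  simp only [huP] at hmax
  rw [integral_complex_ofReal, Complex.norm_real] at hmax
  exact (le_abs_self _).trans hmax

instance fact_two_pi_pos : Fact (0 < 2 * Real.pi) := ⟨Real.two_pi_pos⟩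

/-- the circle `ℝ / 2πℤ` -/
abbrev TT : Type := AddCircle (2 * Real.pi)

/-- The point on the unit circle in `ℂ`. -/
noncomputable def ec (x : TT) : ℂ := (AddCircle.toCircle x : ℂ)

lemma ec_norm (x : TT) : ‖ec x‖ = 1 := Circle.norm_coe _

lemma ec_ne (x : TT) : ec x ≠ 0 := by simp [ec]

lemma ec_cont : Continuous ec := by
  unfold ec
  exact continuous_subtype_val.comp AddCircle.continuous_toCircle

lemma ec_add (x y : TT) : ec (x + y) = ec x * ec y := by simp [ec, AddCircle.toCircle_add]

lemma ec_coe (θ : ℝ) : ec (θ : TT) = Complex.exp (Complex.I * (θ : ℂ)) := by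
  have : (2 * Real.pi / (2 * Real.pi)) = 1 := div_self Real.two_pi_pos.ne'
  simp only [ec, AddCircle.toCircle_apply_mk, this, one_mul, Circle.coe_exp]
  rw [mul_comm]

lemma ec_inj : Function.Injective ec := by
  intro x y h
  exact AddCircle.injective_toCircle Real.two_pi_pos.ne' (Subtype.ext h)

lemma ec_surj (w : ℂ) : ∃ t : TT, w = ‖w‖ * ec t := by
  refine ⟨((w.arg : ℝ) : TT), ?_⟩
  rw [ec_coe, mul_comm Complex.I, Complex.norm_mul_exp_arg_mul_I]

/-- regularised difference -/
noncomputable def Df (ψ : ℂ → ℂ) (w : ℂ) (x y : TT) : ℂ :=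
  ec x - ec y + w * (ψ (w * (ec x)⁻¹) - ψ (w * (ec y)⁻¹))

/-- regularised derivative -/
noncomputable def Qf (ψ : ℂ → ℂ) (w : ℂ) (x : TT) : ℂ :=
  1 - deriv ψ (w * (ec x)⁻¹) * (w * (ec x)⁻¹) ^ 2

/-- the regularised integrand -/
noncomputable def Pf (ψ : ℂ → ℂ) (n : ℕ) (w : ℂ) (x : Fin n → TT) : ℂ :=
  (∏ p ∈ Finset.univ.filter (fun p : Fin n × Fin n => p.1 < p.2), Df ψ w (x p.1) (x p.2) ^ 2) *
    ∏ μ, Qf ψ w (x μ)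

lemma mul_ec_mem {w : ℂ} (hw : w ∈ Metric.ball (0 : ℂ) 1) (x : TT) :
    w * (ec x)⁻¹ ∈ Metric.ball (0 : ℂ) 1 := by
  simpa [ec_norm] using hw

lemma Pf_cont (ψ : ℂ → ℂ) (hψ : DifferentiableOn ℂ ψ (Metric.ball 0 1)) (n : ℕ) :
    ContinuousOn (Function.uncurry (Pf ψ n)) (Metric.ball 0 1 ×ˢ Set.univ) := by
  have hψ' : ContinuousOn (deriv ψ) (Metric.ball 0 1) :=
    (hψ.deriv Metric.isOpen_ball).continuousOn
  have hm : ∀ i : Fin n, Continuous (fun q : ℂ × (Fin n → TT) => q.1 * (ec (q.2 i))⁻¹) := by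
    intro i
    have : Continuous (fun q : ℂ × (Fin n → TT) => ec (q.2 i)) := ec_cont.comp (by fun_prop)
    exact continuous_fst.mul (this.inv₀ fun q => ec_ne _)
  have he : ∀ i : Fin n, Continuous (fun q : ℂ × (Fin n → TT) => ec (q.2 i)) := 
    fun i => ec_cont.comp (by fun_prop)
  have h1 : ∀ i : Fin n, ContinuousOn (fun q : ℂ × (Fin n → TT) => ψ (q.1 * (ec (q.2 i))⁻¹))
      (Metric.ball 0 1 ×ˢ Set.univ) := fun i =>
    hψ.continuousOn.comp (hm i).continuousOn fun q hq => mul_ec_mem hq.1 _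
  have h2 : ∀ i : Fin n, ContinuousOn (fun q : ℂ × (Fin n → TT) => deriv ψ (q.1 * (ec (q.2 i))⁻¹))
      (Metric.ball 0 1 ×ˢ Set.univ) := fun i =>
    hψ'.comp (hm i).continuousOn fun q hq => mul_ec_mem hq.1 _
  unfold Function.uncurry Pf Df Qf
  refine ContinuousOn.mul (continuousOn_finsetProd _ fun p _ => ?_)
    (continuousOn_finsetProd _ fun i _ => ?_)
  · exact (((he _).sub (he _)).continuousOn.add
      (continuous_fst.continuousOn.mul ((h1 _).sub (h1 _)))).pow 2
  · exact continuousOn_const.sub ((h2 i).mul ((hm i).continuousOn.pow 2))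

lemma Pf_diff (ψ : ℂ → ℂ) (hψ : DifferentiableOn ℂ ψ (Metric.ball 0 1)) (n : ℕ)
    (x : Fin n → TT) : DifferentiableOn ℂ (fun w => Pf ψ n w x) (Metric.ball 0 1) := by
  have hm : ∀ i : Fin n, DifferentiableOn ℂ (fun w : ℂ => w * (ec (x i))⁻¹) (Metric.ball 0 1) :=
    fun i => by fun_prop
  have h1 : ∀ i : Fin n, DifferentiableOn ℂ (fun w => ψ (w * (ec (x i))⁻¹)) (Metric.ball 0 1) :=
    fun i => hψ.comp (hm i) fun q hq => mul_ec_mem hq _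
  have h2 : ∀ i : Fin n, DifferentiableOn ℂ (fun w => deriv ψ (w * (ec (x i))⁻¹)) (Metric.ball 0 1) :=
    fun i => (hψ.deriv Metric.isOpen_ball).comp (hm i) fun q hq => mul_ec_mem hq _
  unfold Pf Df Qf
  refine DifferentiableOn.mul (DifferentiableOn.fun_finsetProd fun p _ => ?_)
    (DifferentiableOn.fun_finsetProd fun i _ => ?_)
  · exact ((differentiableOn_const _).add (differentiableOn_id.mul ((h1 _).sub (h1 _)))).pow 2
  · exact (differentiableOn_const _).sub ((h2 i).mul ((hm i).pow 2))

lemma Pf_rot (ψ : ℂ → ℂ) (n : ℕ) (w : ℂ) (t : TT) (x : Fin n → TT) :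
    ‖Pf ψ n (w * ec t) (x + fun _ => t)‖ = ‖Pf ψ n w x‖ := by
  have hm : ∀ i, (w * ec t) * (ec (x i + t))⁻¹ = w * (ec (x i))⁻¹ := by
    intro i
    have := ec_ne t
    have := ec_ne (x i)
    simp only [ec_add]
    field_simp
  have hD : ∀ i j, ‖Df ψ (w * ec t) (x i + t) (x j + t)‖
      = ‖Df ψ w (x i) (x j)‖ := by
    intro i j
    have : Df ψ (w * ec t) (x i + t) (x j + t)
      = ec t * Df ψ w (x i) (x j) := by
      unfold Df
      rw [hm, hm]
      simp only [ec_add]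
      ring
    rw [this, norm_mul, ec_norm, one_mul]
  unfold Pf
  simp only [norm_mul, norm_prod, norm_pow, Pi.add_apply, hD]
  simp only [Qf, hm]

lemma Pf_int_rot (ψ : ℂ → ℂ) (n : ℕ) (w : ℂ) :
    ∫ x, ‖Pf ψ n w x‖ = ∫ x, ‖Pf ψ n (‖w‖ : ℂ) x‖ := by
  obtain ⟨t, ht⟩ := ec_surj w
  rw [← integral_add_right_eq_self (fun x => ‖Pf ψ n w x‖) (fun _ => t)]
  congr 1
  ext x
  conv_lhs => rw [ht]
  exact Pf_rot ψ n _ t x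

lemma Pf_mono (ψ : ℂ → ℂ) (hψ : DifferentiableOn ℂ ψ (Metric.ball 0 1)) (n : ℕ)
    (s t : ℝ) (hs : 0 ≤ s) (hst : s ≤ t) (ht0 : 0 < t) (ht : t < 1) :
    ∫ x, ‖Pf ψ n (s : ℂ) x‖ ≤ ∫ x, ‖Pf ψ n (t : ℂ) x‖ :=
  hardy_mono volume (Pf ψ n) (Pf_cont ψ hψ n) (Pf_diff ψ hψ n) (fun w _ => Pf_int_rot ψ n w)
    s t hs hst ht0 ht

lemma Pf_slice (ψ : ℂ → ℂ) (hψ : DifferentiableOn ℂ ψ (Metric.ball 0 1)) (n : ℕ)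
    (z : ℂ) (hz : z ∈ Metric.ball (0 : ℂ) 1) : Continuous (Pf ψ n z) := by
  have : ContinuousOn (fun x => Function.uncurry (Pf ψ n) (z, x)) Set.univ :=
    (Pf_cont ψ hψ n).comp (by fun_prop) (fun x _ => ⟨hz, trivial⟩)
  simpa [continuousOn_univ, Function.uncurry] using this

lemma Pf_zero_pos (ψ : ℂ → ℂ) (hψ : DifferentiableOn ℂ ψ (Metric.ball 0 1)) (n : ℕ) :
    0 < ∫ x, ‖Pf ψ n 0 x‖ := by
  have hmem : ∀ i : Fin n, ((i : ℝ) / n) ∈ Set.Ico (0 : ℝ) (0 + 2 * Real.pi) := by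
    intro i
    have h1 : ((i : ℕ) : ℝ) < n := by exact_mod_cast i.2
    have h2 : (0 : ℝ) < n := lt_of_le_of_lt (by positivity) h1
    refine ⟨by positivity, ?_⟩
    have h3 : ((i : ℕ) : ℝ) / n < 1 := (div_lt_one h2).2 h1
    linarith [Real.pi_gt_three]
  refine (Pf_slice ψ hψ n 0 (by simp)).norm.integral_pos_of_hasCompactSupport_nonneg_nonzero
    (HasCompactSupport.of_compactSpace _) (fun x => norm_nonneg _) 
    (x := fun i => (((i : ℝ) / n : ℝ) : TT)) ?_
  unfold Pf
  rw [norm_ne_zero_iff, mul_ne_zero_iff, Finset.prod_ne_zero_iff, Finset.prod_ne_zero_iff]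
  constructor
  · intro p hp
    simp only [Df, zero_mul, add_zero]
    refine pow_ne_zero _ (sub_ne_zero.2 fun h => ?_)
    have h1 := (AddCircle.coe_eq_coe_iff_of_mem_Ico (hmem _) (hmem _)).1 (ec_inj h)
    have h0 : (n : ℝ) ≠ 0 := by
      have := p.1.pos
      positivity
    rw [div_left_inj' h0] at h1
    have h2 := (Finset.mem_filter.1 hp).2
    exact h2.ne (Fin.ext (by exact_mod_cast h1))
  · intro i _
    simp [Qf]

lemma integral_torus (n : ℕ) (g : (Fin n → TT) → ℝ) (hg : Continuous g) :
    ∫ θ in Set.pi Set.univ (fun _ : Fin n => Set.Icc (-Real.pi) Real.pi), g (fun i => (θ i : TT))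
      = ∫ x, g x := by
  have h1 : MeasurePreserving ((↑) : ℝ → TT) (volume.restrict (Set.Icc (-Real.pi) Real.pi)) volume := by
    have := AddCircle.measurePreserving_mk (2 * Real.pi) (-Real.pi)
    rw [restrict_Ioc_eq_restrict_Icc] at this
    rwa [show -Real.pi + 2 * Real.pi = Real.pi by ring] at this
  have h2 := measurePreserving_pi (fun _ : Fin n => volume.restrict (Set.Icc (-Real.pi) Real.pi))
    (fun _ : Fin n => (volume : Measure TT)) (fun _ => h1)
  rw [← Measure.restrict_pi_pi] at h2
  have h3 := integral_map h2.measurable.aemeasurable (f := g)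
    (by rw [h2.map_eq]; exact hg.aestronglyMeasurable)
  rw [h2.map_eq] at h3
  exact h3.symm

lemma card_pairs (n : ℕ) :
    2 * (Finset.univ.filter (fun p : Fin n × Fin n => p.1 < p.2)).card = n * (n - 1) := by
  have h : (Finset.univ.filter (fun p : Fin n × Fin n => p.1 < p.2)).card
      = (Finset.univ.filter (fun p : Fin n × Fin n => p.2 < p.1)).card := by
    refine Finset.card_bij (fun p _ => p.swap) ?_ ?_ ?_
    · intro p hp; simpa using hp
    · intro p _ q _ h; exact Prod.swap_injective h
    · intro p hp; exact ⟨p.swap, by simpa using hp, by simp⟩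
  have h2 := Finset.offDiag_card (Finset.univ : Finset (Fin n))
  have h3 : (Finset.univ : Finset (Fin n)).offDiag =
      (Finset.univ.filter (fun p : Fin n × Fin n => p.1 < p.2)) ∪
      (Finset.univ.filter (fun p : Fin n × Fin n => p.2 < p.1)) := by
    ext p
    simp [lt_or_lt_iff_ne]
  rw [h3, Finset.card_union_of_disjoint] at h2
  · rw [← h] at h2
    rw [Nat.mul_sub]
    simp at h2 ⊢
    omega
  · rw [Finset.disjoint_filter]
    intro p _ h
    exact h.le.not_gt

lemma psi_diff (c : ℕ → ℂ)
    (hL : ∀ z : ℂ, 1 < ‖z‖ → Summable (fun k : ℕ => ‖c k * z ^ (-(k : ℤ) - 1)‖)) :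
    DifferentiableOn ℂ (fun w : ℂ => ∑' k, c k * w ^ (k + 1)) (Metric.ball 0 1) := by
  intro w hw
  have hw1 : ‖w‖ < 1 := by simpa using hw
  obtain ⟨ρ, h1, h2⟩ := exists_between hw1
  have h0 : 0 < ρ := (norm_nonneg w).trans_lt h1
  have hs := hL ((ρ⁻¹ : ℝ) : ℂ) (by
    rw [Complex.norm_real, Real.norm_eq_abs, abs_of_pos (by positivity)]
    exact (one_lt_inv₀ h0).2 h2)
  have hd : DifferentiableOn ℂ (fun w : ℂ => ∑' k, c k * w ^ (k + 1)) (Metric.ball 0 ρ) := by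
    refine Complex.differentiableOn_tsum_of_summable_norm (u := fun k => ‖c k‖ * ρ ^ (k + 1))
      ?_ (fun i => by fun_prop) Metric.isOpen_ball ?_
    · convert hs using 2 with k
      rw [norm_mul, norm_zpow, Complex.norm_real, Real.norm_eq_abs, abs_of_pos (by positivity),
        inv_zpow', neg_sub, sub_neg_eq_add, add_comm (1 : ℤ)]
      norm_cast
    · intro k z hz
      rw [norm_mul, norm_pow]
      have : ‖z‖ ≤ ρ := by
        rw [mem_ball_zero_iff] at hz
        exact hz.le
      gcongr
  exact (hd.differentiableAt (Metric.isOpen_ball.mem_nhds (by simpa using h1))).differentiableWithinAt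

lemma Zn_eq (φ ψ : ℂ → ℂ) (φ₀ : ℂ) (hψ : DifferentiableOn ℂ ψ (Metric.ball 0 1))
    (h : ∀ z : ℂ, 1 < ‖z‖ → φ z = z + φ₀ + ψ z⁻¹) (n : ℕ) (r : ℝ) (hr : 1 < r) :
    Zn φ n r = (1 / n.factorial) * ∫ x, ‖Pf ψ n ((r⁻¹ : ℝ) : ℂ) x‖ := by
  have hr0 : 0 < r := by linarith
  have hrc : (r : ℂ) ≠ 0 := by exact_mod_cast hr0.ne'
  have hrb : ((r⁻¹ : ℝ) : ℂ) ∈ Metric.ball (0 : ℂ) 1 := by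
    rw [mem_ball_zero_iff, Complex.norm_real, Real.norm_eq_abs, abs_of_pos (by positivity)]
    exact inv_lt_one_of_one_lt₀ hr
  have hn : ∀ x : TT, 1 < ‖(r : ℂ) * ec x‖ := by
    intro x
    rw [norm_mul, ec_norm, Complex.norm_real, Real.norm_eq_abs, abs_of_pos hr0, mul_one]
    exact hr
  have hinv : ∀ x : TT, ((r : ℂ) * ec x)⁻¹ = ((r⁻¹ : ℝ) : ℂ) * (ec x)⁻¹ := by
    intro x; rw [mul_inv]; push_cast; rfl
  have hD : ∀ x y : TT, φ (r * ec x) - φ (r * ec y) = r * Df ψ ((r⁻¹ : ℝ) : ℂ) x y := by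
    intro x y
    rw [h _ (hn x), h _ (hn y), hinv, hinv]
    unfold Df
    push_cast
    field_simp
    ring
  have hQ : ∀ x : TT, deriv φ (r * ec x) = Qf ψ ((r⁻¹ : ℝ) : ℂ) x := by
    intro x
    have hne : (r : ℂ) * ec x ≠ 0 := mul_ne_zero hrc (ec_ne x)
    have hev : φ =ᶠ[nhds (r * ec x)] fun z => z + φ₀ + ψ z⁻¹ := by
      have : IsOpen {z : ℂ | 1 < ‖z‖} := isOpen_lt continuous_const continuous_norm
      filter_upwards [this.mem_nhds (hn x)] with z hz using h z hz
    rw [hev.deriv_eq]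
    have hb := mul_ec_mem hrb x
    rw [← hinv] at hb
    have h1 := (hψ.differentiableAt (Metric.isOpen_ball.mem_nhds hb)).hasDerivAt
    have h2 := h1.comp _ (hasDerivAt_inv hne)
    have h3 := ((hasDerivAt_id (r * ec x)).add_const φ₀).add h2
    have h4 := h3.deriv
    unfold Qf
    rw [← hinv]
    refine Eq.trans h4 ?_
    rw [inv_pow]
    ring
  have hkey : ∀ θ : Fin n → ℝ, 
      (∏ p ∈ Finset.univ.filter (fun p : Fin n × Fin n => p.1 < p.2),
        ‖φ ((r : ℂ) * Complex.exp (Complex.I * (θ p.1 : ℂ)))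
          - φ ((r : ℂ) * Complex.exp (Complex.I * (θ p.2 : ℂ)))‖ ^ 2) *
      ∏ μ, ‖deriv φ ((r : ℂ) * Complex.exp (Complex.I * (θ μ : ℂ)))‖
      = r ^ (n * (n - 1)) * ‖Pf ψ n ((r⁻¹ : ℝ) : ℂ) (fun i => (θ i : TT))‖ := by
    intro θ
    simp only [← ec_coe, hD, hQ, Pf, norm_mul, norm_prod, norm_pow, mul_pow,
      Finset.prod_mul_distrib, Finset.prod_const, ← pow_mul, card_pairs]
    rw [Complex.norm_real, Real.norm_eq_abs, abs_of_pos hr0, mul_assoc]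
  unfold Zn
  simp only [hkey]
  rw [integral_const_mul,
    integral_torus n (fun x => ‖Pf ψ n ((r⁻¹ : ℝ) : ℂ) x‖) (Pf_slice ψ hψ n _ hrb).norm]
  have : r ^ (n * (n - 1)) ≠ 0 := by positivity
  field_simp

/-- For a univalent `φ` on the exterior disk with hydrodynamic
normalization, `r ↦ E_n(r)` is nonincreasing on `(1, ∞)`. -/
theorem stmt13 (φ : ℂ → ℂ) (φ₀ : ℂ) (c : ℕ → ℂ)
    (hφ : DifferentiableOn ℂ φ {z : ℂ | 1 < ‖z‖})
    (hinj : Set.InjOn φ {z : ℂ | 1 < ‖z‖})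
    (hLaurent : ∀ z : ℂ, 1 < ‖z‖ →
      Summable (fun k : ℕ => ‖c k * z ^ (-(k : ℤ) - 1)‖) ∧
      φ z = z + φ₀ + ∑' k : ℕ, c k * z ^ (-(k : ℤ) - 1))
    (n : ℕ) (hn : 1 ≤ n) :
    ∀ r r' : ℝ, 1 < r → r ≤ r' → En φ n r' ≤ En φ n r := by
  intro r r' hr hrr
  have hψ := psi_diff c (fun z hz => (hLaurent z hz).1)
  have h : ∀ z : ℂ, 1 < ‖z‖ → φ z = z + φ₀ + (fun w : ℂ => ∑' k, c k * w ^ (k + 1)) z⁻¹ := by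
    intro z hz
    rw [(hLaurent z hz).2]
    congr 1
    refine tsum_congr fun k => ?_
    rw [inv_pow, ← zpow_natCast, ← zpow_neg]
    congr 2
    push_cast
    ring
  generalize (fun w : ℂ => ∑' k, c k * w ^ (k + 1)) = ψ at hψ h
  have hr' : 1 < r' := hr.trans_le hrr
  have hm := Pf_mono ψ hψ n r'⁻¹ r⁻¹ (by positivity) (inv_anti₀ (by linarith) hrr)
    (by positivity) (inv_lt_one_of_one_lt₀ hr)
  have hp := Pf_mono ψ hψ n 0 r'⁻¹ le_rfl (by positivity)
    (by positivity) (inv_lt_one_of_one_lt₀ hr')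
  have hz := Pf_zero_pos ψ hψ n
  rw [Complex.ofReal_zero] at hp
  have hpos := hz.trans_le hp
  unfold En
  rw [Zn_eq φ ψ φ₀ hψ h n r hr, Zn_eq φ ψ φ₀ hψ h n r' hr']
  have := Real.pi_pos
  have := n.factorial_pos
  apply Real.log_le_log
  · positivity
  · gcongr
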